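/- Fix a ∈ ℤ and set b = max{|a|+1, 2}. For all v ∈ Ḣ^b_⋄ and w ∈ Ḣ^{a+1}_⋄ one has ‖B[v,w]‖_{Ḣ^a} + ‖B[w,v]‖_{Ḣ^a} ≲ ‖v‖_{Ḣ^b} ‖w‖_{Ḣ^{a+1}}. In particular, if a ≥ 1 then ‖B[v,w]‖_{Ḣ^a} + ‖B[w,v]‖_{Ḣ^a} ≲ ‖v‖_{Ḣ^{a+1}} ‖w‖_{Ḣ^{a+1}}. -/

import Mathlib

open MeasureTheory Set
open scoped BigOperators

noncomputable section

namespace NS2D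

/-- Nonzero Fourier frequencies of the 2D torus `Ω = 𝕋²`. -/
def Freq : Type := {k : ℤ × ℤ // k ≠ 0}

/-- Squared Euclidean modulus `|k|²` of a frequency. -/
def knormSq (k : Freq) : ℝ := (k.1.1 : ℝ) ^ 2 + (k.1.2 : ℝ) ^ 2

/-- Eigenvalue `λ_k = 4π²|k|²` of the periodic Laplacian `−Δ`. -/
def lam (k : Freq) : ℝ := 4 * Real.pi ^ 2 * knormSq k

/-- A divergence-free mean-zero vector field `u ∈ Ḣ_⋄` (or, more generally, an
element of the scale `Ḣ^α_⋄`) on the torus is represented by its Fourier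
coefficients `c k` along the orthonormal basis
`e_k(x) = |k|⁻¹ (k₂, −k₁) exp(2πi k·x)` of divergence-free fields. -/
abbrev Coef : Type := Freq → ℂ

/-- Negation of a frequency. -/
def fneg (k : Freq) : Freq := ⟨-k.1, neg_ne_zero.mpr k.2⟩

/-- The conjugacy condition expressing that the coefficients `c` represent a
real-valued vector field (note `e_{−k} = − conj e_k`). -/
def IsReal (c : Coef) : Prop := ∀ k, c (fneg k) = - (starRingEnd ℂ) (c k)

/-- Squared homogeneous Sobolev norm `‖·‖²_{Ḣ^α} = Σ_k λ_k^α |c k|²`. -/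
def hSq (α : ℝ) (c : Coef) : ℝ := ∑' k, lam k ^ α * ‖c k‖ ^ 2

/-- Homogeneous Sobolev norm `‖·‖_{Ḣ^α}`. -/
def hN (α : ℝ) (c : Coef) : ℝ := Real.sqrt (hSq α c)

/-- Finiteness of the `Ḣ^α`-norm. -/
def FinH (α : ℝ) (c : Coef) : Prop := Summable fun k => lam k ^ α * ‖c k‖ ^ 2

/-- Membership in `Ḣ^α_⋄` (real-valued field with finite `Ḣ^α`-norm). -/
def MemH (α : ℝ) (c : Coef) : Prop := IsReal c ∧ FinH α c

/-- Membership in `Ḣ^∞_⋄ = C^∞(Ω)² ∩ Ḣ_⋄`: all Sobolev norms are finite. -/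
def MemHinf (c : Coef) : Prop := ∀ α : ℝ, MemH α c

/-- Real `Ḣ^α` inner product `⟨·,·⟩_{Ḣ^α}` (for real-valued fields). -/
def hInner (α : ℝ) (c d : Coef) : ℝ := ∑' k, lam k ^ α * (c k * (starRingEnd ℂ) (d k)).re

/-- The `L²` inner product. -/
def innerC (c d : Coef) : ℂ := ∑' k, c k * (starRingEnd ℂ) (d k)

/-- The unit vector `(k₂, −k₁)/|k|` spanning the divergence-free direction at
frequency `k`. -/
def evec (k : Freq) : ℝ × ℝ :=
  ((k.1.2 : ℝ) / Real.sqrt (knormSq k), -((k.1.1 : ℝ)) / Real.sqrt (knormSq k))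

/-- Euclidean dot product on `ℝ²`. -/
def dotR (a b : ℝ × ℝ) : ℝ := a.1 * b.1 + a.2 * b.2

/-- A frequency as a real vector. -/
def fvec (k : Freq) : ℝ × ℝ := ((k.1.1 : ℝ), (k.1.2 : ℝ))

/-- Fourier coefficients (along the basis `e_k`) of the Leray-projected
transport nonlinearity `B[u,v] = P[(u·∇)v]`:
`(B[u,v])^(k) · ē_k = 2πi Σ_{m+n=k, n≠0} c_m d_n (e_m·n)(e_n·e_k)`. -/
def Bc (c d : Coef) : Coef := fun k =>
  (((2 * Real.pi : ℝ) : ℂ) * Complex.I) *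
    ∑' m : Freq,
      if h : k.1 - m.1 ≠ 0 then
        c m * d ⟨k.1 - m.1, h⟩ *
          (((dotR (evec m) (fvec ⟨k.1 - m.1, h⟩) *
            dotR (evec ⟨k.1 - m.1, h⟩) (evec k) : ℝ)) : ℂ)
      else 0

/-- The Laplacian `Δ` acting on the scale: `(Δu)^(k) = −λ_k û(k)`. -/
def lapC (c : Coef) : Coef := fun k => -((lam k : ℝ) : ℂ) * c k

/-- Continuity of a trajectory `t ↦ u(t)`, `t ∈ [0,T]`, for the `Ḣ^α`-norm:
`u ∈ C([0,T], Ḣ^α_⋄)`. -/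
def ContH (α : ℝ) (T : ℝ) (u : ℝ → Coef) : Prop :=
  ∀ t ∈ Icc (0:ℝ) T, ∀ ε > 0, ∃ δ > 0, ∀ s ∈ Icc (0:ℝ) T,
    |s - t| < δ → hN α (u s - u t) < ε

/-- Membership `u ∈ L²([0,T], Ḣ^α_⋄)`. -/
def MemL2H (α : ℝ) (T : ℝ) (u : ℝ → Coef) : Prop :=
  (∀ t ∈ Ioc (0:ℝ) T, MemH α (u t)) ∧
    IntegrableOn (fun t => hSq α (u t)) (Ioc 0 T)

/-- `u` is a strong solution on `[0,T]` of the (Leray-projected) periodic 2D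
Navier–Stokes equations `du/dt + νAu + B[u,u] = f`, `u(0) = θ`, posed in `Ḣ_⋄`:
the Fourier coefficients satisfy the corresponding system of ODEs on `(0,T]`,
the trajectory is continuous into `Ḣ¹_⋄` (in particular at `t = 0`), and lies
in `L²([0,T], Ḣ²_⋄)`. -/
structure IsNSSol (ν : ℝ) (f : Coef) (T : ℝ) (θ : Coef) (u : ℝ → Coef) : Prop where
  init : u 0 = θ
  real : ∀ t ∈ Icc (0:ℝ) T, IsReal (u t)
  deriv : ∀ (k : Freq), ∀ t ∈ Ioc (0:ℝ) T,
    HasDerivAt (fun s => u s k)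
      (f k - ((ν * lam k : ℝ) : ℂ) * u t k - Bc (u t) (u t) k) t
  contH1 : ContH 1 T u
  memL2H2 : MemL2H 2 T u

/-- `U` solves the linear parabolic equation
`dU/dt − νΔU + B[u₀, U] + B[U, u₁] = g`, `U(0) = ξ`, on `[0,T]`. -/
structure IsLinPSol (ν : ℝ) (u₀ u₁ : ℝ → Coef) (g : ℝ → Coef) (T : ℝ) (ξ : Coef)
    (U : ℝ → Coef) : Prop where
  init : U 0 = ξ
  real : ∀ t ∈ Icc (0:ℝ) T, IsReal (U t)
  deriv : ∀ (k : Freq), ∀ t ∈ Ioc (0:ℝ) T,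
    HasDerivAt (fun s => U s k)
      (g t k - ((ν * lam k : ℝ) : ℂ) * U t k - Bc (u₀ t) (U t) k - Bc (U t) (u₁ t) k) t

/-- `U = 𝕀_θ[ξ]` solves the linearisation of Navier–Stokes along the
trajectory `u₀`: `dU/dt − νΔU + B[u₀,U] + B[U,u₀] = 0`, `U(0) = ξ`. -/
def IsLinSol (ν : ℝ) (u₀ : ℝ → Coef) (T : ℝ) (ξ : Coef) (U : ℝ → Coef) : Prop :=
  IsLinPSol ν u₀ u₀ (fun _ => 0) T ξ U

/-- The heat semigroup `S_t = e^{νtΔ}` on the scale `Ḣ^α_⋄`. -/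
def heatS (ν t : ℝ) (c : Coef) : Coef := fun k =>
  ((Real.exp (-(ν * lam k * t)) : ℝ) : ℂ) * c k

/-- Duhamel representation of the solution of the periodic heat equation
`du/dt − νΔu = g`, `u(0) = h`. -/
def heatSol (ν : ℝ) (g : ℝ → Coef) (h : Coef) : ℝ → Coef := fun t k =>
  ((Real.exp (-(ν * lam k * t)) : ℝ) : ℂ) *
    (h k + ∫ s in (0:ℝ)..t, ((Real.exp (ν * lam k * s) : ℝ) : ℂ) * g s k)

/-- Real-linearity of a map on the coefficient space. -/
def IsLinMap (Λ : Coef → Coef) : Prop :=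
  (∀ c d, Λ (c + d) = Λ c + Λ d) ∧ ∀ (r : ℝ) (c : Coef), Λ (r • c) = r • Λ c

/-- `Λ` defines a compact (linear) operator `Ḣ^α_⋄ → Ḣ^β_⋄`: it is linear,
maps `Ḣ^α_⋄` into `Ḣ^β_⋄`, and the image of the `Ḣ^α`-unit ball is totally
bounded for the `Ḣ^β`-norm. -/
def IsCompactOp (α β : ℝ) (Λ : Coef → Coef) : Prop :=
  IsLinMap Λ ∧ (∀ c, MemH α c → MemH β (Λ c)) ∧
    ∀ ε > 0, ∃ S : Finset Coef, ∀ c, MemH α c → hN α c ≤ 1 →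
      ∃ s ∈ S, hN β (Λ c - s) < ε

/-- The index `a* = |a|+1` if `|a| ≤ 1`, `a* = |a|` if `|a| ≥ 2`. -/
def astar (a : ℤ) : ℤ := if |a| ≤ 1 then |a| + 1 else |a|

/-- `i`-th component of the unit vector `evec k`. -/
def evecC (i : Fin 2) (k : Freq) : ℝ := if i = 0 then (evec k).1 else (evec k).2

/-- Fourier coefficients (over all of `ℤ²`) of the scalar component `u_i` of a
divergence-free field with coefficients `c`. -/
def compCoef (i : Fin 2) (c : Coef) : ℤ × ℤ → ℂ := fun n =>
  if h : n ≠ 0 then c ⟨n, h⟩ * ((evecC i ⟨n, h⟩ : ℝ) : ℂ) else 0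

/-- Convolution: Fourier coefficients of a pointwise product of two scalar
functions. -/
def convC (F G : ℤ × ℤ → ℂ) : ℤ × ℤ → ℂ := fun n => ∑' m : ℤ × ℤ, F m * G (n - m)

/-- Squared homogeneous Sobolev norm of a scalar function given by its Fourier
coefficients over `ℤ²`. -/
def hSqScalar (α : ℝ) (F : ℤ × ℤ → ℂ) : ℝ := ∑' k : Freq, lam k ^ α * ‖F k.1‖ ^ 2

/-- `‖u vᵀ‖²_{Ḣ^α} = Σ_{i,j=1}^2 ‖u_i v_j‖²_{Ḣ^α}`. -/
def hSqMat (α : ℝ) (c d : Coef) : ℝ :=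
  ∑ i : Fin 2, ∑ j : Fin 2, hSqScalar α (convC (compCoef i c) (compCoef j d))

/-- The character `exp(2πi k·x)`. -/
def efun (k : Freq) (x : ℝ × ℝ) : ℂ :=
  Complex.exp ((((2 * Real.pi : ℝ)) : ℂ) * Complex.I *
    ((k.1.1 : ℂ) * (x.1 : ℂ) + (k.1.2 : ℂ) * (x.2 : ℂ)))

/-- Pointwise evaluation of the `i`-th component of the field. -/
def evalComp (i : Fin 2) (c : Coef) (x : ℝ × ℝ) : ℂ :=
  ∑' k, c k * ((evecC i k : ℝ) : ℂ) * efun k x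

/-- Supremum norm (`C⁰`-norm) of the field. -/
def c0N (c : Coef) : ℝ := ⨆ x : ℝ × ℝ, max ‖evalComp 0 c x‖ ‖evalComp 1 c x‖

/-- The partial derivative `∂_j` acting on divergence-free fields. -/
def pderiv (j : Fin 2) (c : Coef) : Coef := fun k =>
  (((2 * Real.pi : ℝ) : ℂ) * Complex.I) *
    (if j = 0 then ((k.1.1 : ℤ) : ℂ) else ((k.1.2 : ℤ) : ℂ)) * c k

/-- `C¹`-norm of the field. -/
def c1N (c : Coef) : ℝ := c0N c + c0N (pderiv 0 c) + c0N (pderiv 1 c)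

/-- Norm of the multiplier space `B^ℓ`: `C^ℓ(Ω)²` for `ℓ ≤ 1` and `Ḣ^ℓ` for
`ℓ ≥ 2`. -/
def bN (ℓ : ℕ) (c : Coef) : ℝ :=
  if ℓ = 0 then c0N c else if ℓ = 1 then c1N c else hN (ℓ : ℝ) c

end NS2D

namespace NS2D

open scoped ENNReal

theorem kap_bounds {p q r : ℝ} (hp : 1 ≤ p) (hq : 1 ≤ q) (hr : 1 ≤ r) :
    p ^ (-2:ℤ) ≤ p ^ (-2:ℤ) + q ^ (-2:ℤ) + r ^ (-2:ℤ) ∧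
    q ^ (-2:ℤ) ≤ p ^ (-2:ℤ) + q ^ (-2:ℤ) + r ^ (-2:ℤ) ∧
    p ^ (-1:ℤ) * q ^ (-1:ℤ) ≤ p ^ (-2:ℤ) + q ^ (-2:ℤ) + r ^ (-2:ℤ) := by
  have h1 : 0 < p ^ (-2:ℤ) := by positivity
  have h2 : 0 < q ^ (-2:ℤ) := by positivity
  have h3 : 0 < r ^ (-2:ℤ) := by positivity
  refine ⟨by linarith, by linarith, ?_⟩
  have e1 : p ^ (-2:ℤ) = (p ^ (-1:ℤ))^2 := by rw [← zpow_natCast, ← zpow_mul]; norm_num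
  have e2 : q ^ (-2:ℤ) = (q ^ (-1:ℤ))^2 := by rw [← zpow_natCast, ← zpow_mul]; norm_num
  rw [e1, e2]
  rw [e1] at h1
  rw [e2] at h2
  nlinarith [sq_nonneg (p ^ (-1:ℤ) - q ^ (-1:ℤ))]

theorem zmono {p : ℝ} (hp : 1 ≤ p) {i j : ℤ} (h : i ≤ j) : p ^ i ≤ p ^ j :=
  zpow_le_zpow_right₀ hp h

theorem powdbl {p r : ℝ} (hr : 1 ≤ r) (h : r ≤ 2 * p) (n : ℕ) :
    r ^ (n:ℤ) ≤ 2 ^ n * p ^ (n:ℤ) := by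
  rw [zpow_natCast, zpow_natCast, ← mul_pow]
  exact pow_le_pow_left₀ (by linarith) h n

/-- closing step -/
theorem ker_close {p q C X : ℝ} (hp : 1 ≤ p) (hq : 1 ≤ q) (hC : 0 ≤ C) {s t i j : ℤ} {κ : ℝ}
    (h : X ≤ C * (p ^ i * q ^ j)) {u v : ℤ} (hk : p ^ u * q ^ v ≤ κ)
    (hi : i ≤ s + u) (hj : j ≤ t + v) : X ≤ C * (κ * (p ^ s * q ^ t)) := by
  have hp0 : p ≠ 0 := by linarith
  have hq0 : q ≠ 0 := by linarith
  refine h.trans (mul_le_mul_of_nonneg_left ?_ hC)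
  calc p ^ i * q ^ j ≤ p ^ (s+u) * q ^ (t+v) :=
        mul_le_mul (zmono hp hi) (zmono hq hj) (by positivity) (by positivity)
    _ = (p ^ u * q ^ v) * (p ^ s * q ^ t) := by rw [zpow_add₀ hp0, zpow_add₀ hq0]; ring
    _ ≤ _ := mul_le_mul_of_nonneg_right hk (by positivity)

theorem ker_bound (a b : ℤ) (hb2 : 2 ≤ b) (hb : |a| + 1 ≤ b) :
    ∃ C : ℝ, 0 < C ∧ ∀ p q r : ℝ, 1 ≤ p → 1 ≤ q → 1 ≤ r → r ≤ p + q → q ≤ r + p → p ≤ r + q →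
      r ^ a * min q r ≤ C * ((p ^ (-2:ℤ) + q ^ (-2:ℤ) + r ^ (-2:ℤ)) * (p ^ b * q ^ (a+1))) ∧
      r ^ a * min q r ≤ C * ((p ^ (-2:ℤ) + q ^ (-2:ℤ) + r ^ (-2:ℤ)) * (p ^ (a+1) * q ^ b)) := by
  rcases le_or_gt 0 a with ha | ha
  · obtain ⟨n, rfl⟩ := Int.eq_ofNat_of_zero_le ha
    rw [abs_of_nonneg ha] at hb
    refine ⟨2 ^ n, by positivity, fun p q r hp hq hr h1 h2 h3 => ?_⟩
    obtain ⟨k1, k2, k3⟩ := kap_bounds hp hq hr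
    have k1' : p ^ (-2:ℤ) * q ^ (0:ℤ) ≤ p ^ (-2:ℤ) + q ^ (-2:ℤ) + r ^ (-2:ℤ) := by simpa using k1
    have hq0 : q ≠ 0 := by linarith
    have h0 : r ^ (n:ℤ) * min q r ≤ r ^ (n:ℤ) * q :=
      mul_le_mul_of_nonneg_left (min_le_left _ _) (by positivity)
    have hC : (0:ℝ) ≤ 2 ^ n := by positivity
    rcases Nat.eq_zero_or_pos n with rfl | hn
    · have h : r ^ ((0:ℕ):ℤ) * min q r ≤ 2 ^ 0 * (p ^ (0:ℤ) * q ^ (1:ℤ)) := by simpa using h0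
      exact ⟨ker_close hp hq hC h k1' (by omega) (by omega),
        ker_close hp hq hC h k3 (by simp) (by omega)⟩
    · rcases le_total p q with hpq | hpq
      · have h : r ^ (n:ℤ) * min q r ≤ 2 ^ n * (p ^ (0:ℤ) * q ^ ((n:ℤ)+1)) := by
          refine h0.trans ?_
          rw [zpow_add₀ hq0, zpow_one, zpow_zero, one_mul, ← mul_assoc]
          exact mul_le_mul_of_nonneg_right (powdbl hr (by linarith) n) (by linarith)
        exact ⟨ker_close hp hq hC h k1' (by omega) (by omega),
          ker_close hp hq hC h k1' (by omega) (by omega)⟩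
      · have h : r ^ (n:ℤ) * min q r ≤ 2 ^ n * (p ^ (n:ℤ) * q ^ (1:ℤ)) := by
          refine h0.trans ?_
          rw [zpow_one, ← mul_assoc]
          exact mul_le_mul_of_nonneg_right (powdbl hr (by linarith) n) (by linarith)
        exact ⟨ker_close hp hq hC h k3 (by omega) (by omega),
          ker_close hp hq hC h k3 (by omega) (by omega)⟩
  · obtain ⟨j, hj⟩ : ∃ j : ℕ, a = -(j:ℤ) - 1 := ⟨(-a-1).toNat, by omega⟩
    rw [abs_of_neg ha] at hb
    refine ⟨2 ^ j, by positivity, fun p q r hp hq hr h1 h2 h3 => ?_⟩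
    obtain ⟨k1, k2, k3⟩ := kap_bounds hp hq hr
    have k1' : p ^ (-2:ℤ) * q ^ (0:ℤ) ≤ p ^ (-2:ℤ) + q ^ (-2:ℤ) + r ^ (-2:ℤ) := by simpa using k1
    have k2' : p ^ (0:ℤ) * q ^ (-2:ℤ) ≤ p ^ (-2:ℤ) + q ^ (-2:ℤ) + r ^ (-2:ℤ) := by simpa using k2
    have hr0 : r ≠ 0 := by linarith
    have h0 : r ^ a * min q r ≤ r ^ (-(j:ℤ)) := by
      refine (mul_le_mul_of_nonneg_left (min_le_right _ _) (by positivity)).trans ?_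
      rw [hj, zpow_sub₀ hr0, zpow_one, div_mul_cancel₀ _ hr0]
    have key : ∀ p q : ℝ, 1 ≤ p → 1 ≤ q → q ≤ r + p →
        r ^ (-(j:ℤ)) ≤ 2 ^ j * (p ^ (j:ℤ) * q ^ (-(j:ℤ))) := by
      intro p q hp hq h
      have hm : q ^ j ≤ 2 ^ j * (p ^ j * r ^ j) := by
        rw [← mul_pow, ← mul_pow]
        refine pow_le_pow_left₀ (by linarith) ?_ j
        nlinarith
      rw [zpow_neg, zpow_neg, zpow_natCast, zpow_natCast, zpow_natCast]
      rw [inv_eq_one_div, div_le_iff₀ (by positivity)]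
      have : 2 ^ j * (p ^ j * (q ^ j)⁻¹) * r ^ j = (2 ^ j * (p ^ j * r ^ j)) / q ^ j := by ring
      rw [this, le_div_iff₀ (by positivity)]
      linarith
    have hC : (0:ℝ) ≤ 2 ^ j := by positivity
    refine ⟨ker_close hp hq hC (h0.trans (key p q hp hq h2)) k1' (by omega) (by omega), ?_⟩
    have := h0.trans (key q p hq hp h3)
    rw [mul_comm (q ^ _)] at this
    exact ker_close hp hq hC this k2' (by omega) (by omega)

theorem cs_tsum {ι : Type*} (f g : ι → ℝ≥0∞) :
    (∑' i, f i * g i) ^ 2 ≤ (∑' i, f i ^ 2) * ∑' i, g i ^ 2 := by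
  have h : ∑' i, f i * g i ≤ (∑' i, f i ^ 2) ^ (1/2:ℝ) * (∑' i, g i ^ 2) ^ (1/2:ℝ) := by
    rw [ENNReal.tsum_eq_iSup_sum]
    refine iSup_le fun s => ?_
    refine (ENNReal.inner_le_Lp_mul_Lq s f g Real.HolderConjugate.two_two).trans ?_
    simp only [ENNReal.rpow_two]
    gcongr <;> exact ENNReal.sum_le_tsum s
  calc _ ≤ ((∑' i, f i ^ 2) ^ (1/2:ℝ) * (∑' i, g i ^ 2) ^ (1/2:ℝ)) ^ 2 := by gcongr
    _ = _ := by
      rw [mul_pow, ← ENNReal.rpow_two, ← ENNReal.rpow_two, ← ENNReal.rpow_mul, ← ENNReal.rpow_mul]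
      norm_num

theorem conv_total {G : Type*} [AddCommGroup G] (f g : G → ℝ≥0∞) :
    ∑' k, ∑' m, f m * g (k - m) = (∑' m, f m) * ∑' n, g n := by
  rw [ENNReal.tsum_comm, ← ENNReal.tsum_mul_right]
  refine tsum_congr fun m => ?_
  rw [ENNReal.tsum_mul_left]
  congr 1
  exact (Equiv.subRight m).tsum_eq g

theorem conv_A {G : Type*} [AddCommGroup G] (J f g : G → ℝ≥0∞) :
    ∑' k, (∑' m, J m * (f m * g (k - m))) ^ 2 ≤
      (∑' m, J m ^ 2) * ((∑' m, f m ^ 2) * ∑' n, g n ^ 2) := by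
  calc _ ≤ ∑' k, (∑' m, J m ^ 2) * ∑' m, (f m * g (k - m)) ^ 2 :=
        ENNReal.tsum_le_tsum fun k => cs_tsum _ _
    _ = _ := by
      rw [ENNReal.tsum_mul_left]
      simp only [mul_pow]
      rw [conv_total (fun m => f m ^ 2) (fun m => g m ^ 2)]

theorem conv_B {G : Type*} [AddCommGroup G] (J f g : G → ℝ≥0∞) :
    ∑' k, (∑' m, J (k - m) * (f m * g (k - m))) ^ 2 ≤
      (∑' m, J m ^ 2) * ((∑' m, f m ^ 2) * ∑' n, g n ^ 2) := by
  calc _ ≤ ∑' k, (∑' m, J m ^ 2) * ∑' m, (f m * g (k - m)) ^ 2 := by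
        refine ENNReal.tsum_le_tsum fun k => (cs_tsum _ _).trans_eq ?_
        congr 1
        exact (Equiv.subLeft k).tsum_eq (fun m => J m ^ 2)
    _ = _ := by
      rw [ENNReal.tsum_mul_left]
      simp only [mul_pow]
      rw [conv_total (fun m => f m ^ 2) (fun m => g m ^ 2)]

theorem conv_C {G : Type*} [AddCommGroup G] (J f g : G → ℝ≥0∞) :
    ∑' k, (∑' m, J k * (f m * g (k - m))) ^ 2 ≤
      (∑' m, J m ^ 2) * ((∑' m, f m ^ 2) * ∑' n, g n ^ 2) := by
  rw [← ENNReal.tsum_mul_right]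
  refine ENNReal.tsum_le_tsum fun k => ?_
  rw [ENNReal.tsum_mul_left, mul_pow]
  gcongr
  refine (cs_tsum _ _).trans_eq ?_
  congr 1
  exact (Equiv.subLeft k).tsum_eq (fun m => g m ^ 2)

theorem sq3 (x y z : ℝ≥0∞) : (x + y + z) ^ 2 ≤ 3 * (x ^ 2 + y ^ 2 + z ^ 2) := by
  by_cases h : x = ⊤ ∨ y = ⊤ ∨ z = ⊤
  · rcases h with h | h | h <;> simp [h]
  · push Not at h
    obtain ⟨hx, hy, hz⟩ := h
    lift x to NNReal using hx
    lift y to NNReal using hy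
    lift z to NNReal using hz
    norm_cast
    rw [← NNReal.coe_le_coe]
    push_cast
    nlinarith [sq_nonneg ((x:ℝ) - y), sq_nonneg ((x:ℝ) - z), sq_nonneg ((z:ℝ) - y)]

theorem conv_all {G : Type*} [AddCommGroup G] (J f g : G → ℝ≥0∞) :
    ∑' k, (∑' m, (J m + J (k - m) + J k) * (f m * g (k - m))) ^ 2 ≤
      9 * (∑' m, J m ^ 2) * ((∑' m, f m ^ 2) * ∑' n, g n ^ 2) := by
  simp only [add_mul, ENNReal.tsum_add]
  refine (ENNReal.tsum_le_tsum fun k => sq3 _ _ _).trans ?_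
  rw [ENNReal.tsum_mul_left, ENNReal.tsum_add, ENNReal.tsum_add]
  refine (mul_le_mul_right (add_le_add (add_le_add (conv_A J f g) (conv_B J f g)) (conv_C J f g)) 3).trans_eq ?_
  ring

theorem sumJ : Summable (fun k : ℤ × ℤ => 1 / ((k.1:ℝ)^2 + (k.2:ℝ)^2)^2) := by
  have h1 : Summable (fun x : ℤ => 1 / (1 + (x:ℝ)^2)) := by
    have h := (Real.summable_one_div_int_pow (p := 2)).2 (by norm_num)
    have h2 : Summable (fun x : ℤ => if x = 0 then (1:ℝ) else 0) :=
      summable_of_ne_finset_zero (s := {0}) (by intro b hb; simpa using hb)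
    refine Summable.of_nonneg_of_le (fun x => by positivity) (fun x => ?_) (h.add h2)
    by_cases hx : x = 0
    · simp [hx]
    · have : (0:ℝ) < (x:ℝ)^2 := by positivity
      simp only [hx, if_false, add_zero]
      exact one_div_le_one_div_of_le this (by linarith)
  have h2 := (h1.mul_of_nonneg h1 (fun x => by positivity) (fun x => by positivity)).mul_left 3
  refine Summable.of_nonneg_of_le (fun x => by positivity) (fun k => ?_) h2
  by_cases hk : k = 0
  · simp [hk]
  · have h : (1:ℝ) ≤ (k.1:ℝ)^2 + (k.2:ℝ)^2 := by
      have : (1:ℤ) ≤ k.1^2+k.2^2 := by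
        by_contra hlt
        apply hk
        have h1 : k.1^2 = 0 := by nlinarith [sq_nonneg k.1, sq_nonneg k.2]
        have h2 : k.2^2 = 0 := by nlinarith [sq_nonneg k.1, sq_nonneg k.2]
        exact Prod.ext (by simpa using h1) (by simpa using h2)
      exact_mod_cast this
    rw [div_mul_div_comm, mul_one, mul_one_div, div_le_div_iff₀ (by positivity) (by positivity)]
    nlinarith [sq_nonneg (k.1:ℝ), sq_nonneg (k.2:ℝ), mul_nonneg (sq_nonneg (k.1:ℝ)) (sq_nonneg (k.2:ℝ))]

/-- `2π|n|` for an integer vector. -/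
def PP (n : ℤ × ℤ) : ℝ := 2 * Real.pi * ‖(n.1 : ℂ) + n.2 * Complex.I‖

theorem PP_sq (n : ℤ × ℤ) : PP n ^ 2 = 4 * Real.pi ^ 2 * ((n.1:ℝ) ^ 2 + (n.2:ℝ) ^ 2) := by
  have h : ‖(n.1 : ℂ) + n.2 * Complex.I‖ ^ 2 = (n.1:ℝ) ^ 2 + (n.2:ℝ) ^ 2 := by
    rw [Complex.sq_norm]
    have := Complex.normSq_add_mul_I (n.1:ℝ) (n.2:ℝ)
    push_cast at this
    exact this
  rw [PP, mul_pow, h]; ring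

theorem PP_nonneg (n : ℤ × ℤ) : 0 ≤ PP n := by
  unfold PP; positivity

theorem PP_add (m n : ℤ × ℤ) : PP (m + n) ≤ PP m + PP n := by
  unfold PP
  rw [← mul_add]
  refine mul_le_mul_of_nonneg_left ?_ (by positivity)
  refine le_trans (le_of_eq ?_) (norm_add_le _ _)
  congr 1
  simp only [Prod.fst_add, Prod.snd_add]
  push_cast
  ring

theorem PP_neg (m : ℤ × ℤ) : PP (-m) = PP m := by
  unfold PP
  congr 1
  rw [← norm_neg]
  congr 1
  simp only [Prod.fst_neg, Prod.snd_neg]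
  push_cast
  ring

theorem lam_eq (k : Freq) : lam k = PP k.1 ^ 2 := by rw [PP_sq]; rfl

theorem knormSq_ge (k : Freq) : 1 ≤ knormSq k := by
  have h : (1:ℤ) ≤ k.1.1^2+k.1.2^2 := by
    by_contra hlt
    apply k.2
    have h1 : k.1.1^2 = 0 := by nlinarith [sq_nonneg k.1.1, sq_nonneg k.1.2]
    have h2 : k.1.2^2 = 0 := by nlinarith [sq_nonneg k.1.1, sq_nonneg k.1.2]
    exact Prod.ext (by simpa using h1) (by simpa using h2)
  unfold knormSq
  exact_mod_cast h

theorem PP_ge (k : Freq) : 1 ≤ PP k.1 := by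
  have h1 : 1 ≤ PP k.1 ^ 2 := by
    rw [← lam_eq, lam]
    nlinarith [knormSq_ge k, Real.pi_gt_three]
  nlinarith [PP_nonneg k.1]

theorem lam_rpow (k : Freq) (s : ℤ) : lam k ^ (s:ℝ) = (PP k.1 ^ s) ^ 2 := by
  rw [Real.rpow_intCast, lam_eq, ← zpow_natCast, ← zpow_natCast, ← zpow_mul, ← zpow_mul, mul_comm]

theorem dotR_sq_le (a b : ℝ × ℝ) : dotR a b ^ 2 ≤ (a.1 ^ 2 + a.2 ^ 2) * (b.1 ^ 2 + b.2 ^ 2) := by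
  unfold dotR
  nlinarith [sq_nonneg (a.1 * b.2 - a.2 * b.1)]

theorem evec_unit (k : Freq) : (evec k).1 ^ 2 + (evec k).2 ^ 2 = 1 := by
  have h := knormSq_ge k
  simp only [evec, div_pow, neg_sq]
  rw [Real.sq_sqrt (by linarith), ← add_div, div_eq_one_iff_eq (by linarith), knormSq]
  ring

theorem dot_evec_evec (k l : Freq) : |dotR (evec k) (evec l)| ≤ 1 := by
  have := dotR_sq_le (evec k) (evec l)
  rw [evec_unit, evec_unit] at this
  exact abs_le_one_iff_mul_self_le_one.2 (by nlinarith)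

theorem dot_evec_fvec (k l : Freq) : 2 * Real.pi * |dotR (evec k) (fvec l)| ≤ PP l.1 := by
  have := dotR_sq_le (evec k) (fvec l)
  rw [evec_unit, one_mul] at this
  refine (sq_le_sq₀ (by positivity) (PP_nonneg _)).1 ?_
  rw [mul_pow, sq_abs, PP_sq]
  have h2 : (fvec l).1 ^ 2 + (fvec l).2 ^ 2 = (l.1.1:ℝ)^2 + (l.1.2:ℝ)^2 := rfl
  rw [← h2]
  nlinarith [mul_le_mul_of_nonneg_left this (sq_nonneg (2 * Real.pi))]

theorem dot_shift (k m n : Freq) (h : n.1 = k.1 - m.1) :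
    dotR (evec m) (fvec n) = dotR (evec m) (fvec k) := by
  have h1 : n.1.1 = k.1.1 - m.1.1 := by rw [h]; rfl
  have h2 : n.1.2 = k.1.2 - m.1.2 := by rw [h]; rfl
  simp only [dotR, evec, fvec, h1, h2]
  push_cast
  ring

theorem ker_geom (k m n : Freq) (h : n.1 = k.1 - m.1) :
    2 * Real.pi * |dotR (evec m) (fvec n) * dotR (evec n) (evec k)| ≤ min (PP n.1) (PP k.1) := by
  rw [abs_mul, ← mul_assoc]
  refine (mul_le_of_le_one_right (by positivity) (dot_evec_evec n k)).trans ?_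
  refine le_min (dot_evec_fvec m n) ?_
  rw [dot_shift k m n h]
  exact dot_evec_fvec m k

/-- weighted extended coefficients -/
def FF (s : ℤ) (c : Coef) (n : ℤ × ℤ) : ℝ≥0∞ :=
  if h : n ≠ 0 then ENNReal.ofReal (PP n ^ s * ‖c ⟨n, h⟩‖) else 0

theorem FF_freq (s : ℤ) (c : Coef) (k : Freq) :
    FF s c k.1 = ENNReal.ofReal (PP k.1 ^ s * ‖c k‖) := by
  unfold FF
  rw [dif_pos k.2]
  rfl

theorem FF_sq (s : ℤ) (c : Coef) (k : Freq) :
    FF s c k.1 ^ 2 = ENNReal.ofReal (lam k ^ (s:ℝ) * ‖c k‖ ^ 2) := by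
  have := PP_nonneg k.1
  rw [FF_freq, ← ENNReal.ofReal_pow (by positivity), mul_pow, lam_rpow]

theorem FF_tsum (s : ℤ) (c : Coef) :
    ∑' n, FF s c n ^ 2 = ∑' k : Freq, ENNReal.ofReal (lam k ^ (s:ℝ) * ‖c k‖ ^ 2) := by
  simp only [← FF_sq]
  refine (Function.Injective.tsum_eq (g := fun k : Freq => k.1) Subtype.val_injective
    (f := fun n => FF s c n ^ 2) ?_).symm
  intro n hn
  by_cases h : n = 0
  · simp [FF, h] at hn
  · exact ⟨⟨n, h⟩, rfl⟩

theorem term_nonneg (s : ℤ) (c : Coef) (k : Freq) : 0 ≤ lam k ^ (s:ℝ) * ‖c k‖ ^ 2 := by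
  rw [lam_rpow]; positivity

theorem FF_fin (s : ℤ) (c : Coef) (h : FinH (s:ℝ) c) :
    ∑' n, FF s c n ^ 2 = ENNReal.ofReal (hSq (s:ℝ) c) := by
  rw [FF_tsum, hSq, ENNReal.ofReal_tsum_of_nonneg (term_nonneg s c) h]

theorem hSq_eq (s : ℤ) (c : Coef) : hSq (s:ℝ) c = (∑' n, FF s c n ^ 2).toReal := by
  rw [FF_tsum, ENNReal.tsum_toReal_eq (fun _ => ENNReal.ofReal_ne_top), hSq]
  exact tsum_congr fun k => (ENNReal.toReal_ofReal (term_nonneg s c k)).symm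

def JJ (n : ℤ × ℤ) : ℝ≥0∞ := ENNReal.ofReal (PP n ^ (-2:ℤ))

theorem JJ_sum : ∑' n, JJ n ^ 2 ≠ ⊤ := by
  have h : ∀ n, JJ n ^ 2 = ENNReal.ofReal
      ((4 * Real.pi ^ 2)⁻¹ ^ 2 * (1 / ((n.1:ℝ)^2 + (n.2:ℝ)^2)^2)) := by
    intro n
    have := PP_nonneg n
    rw [JJ, ← ENNReal.ofReal_pow (by positivity)]
    congr 1
    have : PP n ^ (-2:ℤ) = (PP n ^ 2)⁻¹ := by
      rw [zpow_neg]; rfl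
    rw [this, PP_sq, mul_inv, mul_pow, one_div, inv_pow ((n.1:ℝ)^2 + (n.2:ℝ)^2)]
  simp only [h]
  exact (sumJ.mul_left _).tsum_ofReal_ne_top

theorem pointwise_bound (a s t : ℤ) (C : ℝ) (hC : 0 < C)
    (hker : ∀ p q r : ℝ, 1 ≤ p → 1 ≤ q → 1 ≤ r → r ≤ p + q → q ≤ r + p → p ≤ r + q →
      r ^ a * min q r ≤ C * ((p ^ (-2:ℤ) + q ^ (-2:ℤ) + r ^ (-2:ℤ)) * (p ^ s * q ^ t)))
    (c d : Coef) (k : ℤ × ℤ) :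
    FF a (Bc c d) k ≤ ENNReal.ofReal C *
      ∑' m, (JJ m + JJ (k - m) + JJ k) * (FF s c m * FF t d (k - m)) := by
  by_cases hk : k = 0
  · simp [FF, hk]
  obtain ⟨k, rfl⟩ : ∃ k' : Freq, k'.1 = k := ⟨⟨k, hk⟩, rfl⟩
  rw [FF_freq]
  have hPk := PP_nonneg k.1
  have e1 : ENNReal.ofReal (PP k.1 ^ a * ‖Bc c d k‖) =
      ENNReal.ofReal (PP k.1 ^ a * (2 * Real.pi)) * ‖∑' m : Freq,
      if h : k.1 - m.1 ≠ 0 then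
        c m * d ⟨k.1 - m.1, h⟩ *
          (((dotR (evec m) (fvec ⟨k.1 - m.1, h⟩) *
            dotR (evec ⟨k.1 - m.1, h⟩) (evec k) : ℝ)) : ℂ)
      else 0‖ₑ := by
    rw [← ofReal_norm_eq_enorm, ← ENNReal.ofReal_mul (by positivity), Bc, norm_mul, norm_mul,
      Complex.norm_I, Complex.norm_real, Real.norm_of_nonneg (by positivity)]
    congr 1
    ring
  rw [e1]
  refine (mul_le_mul_right (enorm_tsum_le_tsum_enorm) _).trans ?_
  rw [← ENNReal.tsum_mul_left, ← ENNReal.tsum_mul_left]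
  refine le_trans (ENNReal.tsum_le_tsum fun m => ?_)
    (ENNReal.tsum_comp_le_tsum_of_injective (f := fun m : Freq => m.1) Subtype.val_injective _)
  by_cases h : k.1 - m.1 ≠ 0
  · rw [dif_pos h]
    obtain ⟨n, hn⟩ : ∃ n : Freq, n = ⟨k.1 - m.1, h⟩ := ⟨_, rfl⟩
    have hn1 : n.1 = k.1 - m.1 := by rw [hn]
    rw [← hn, ← hn1, FF_freq, FF_freq]
    have hm0 := PP_nonneg m.1
    have hn0 := PP_nonneg n.1
    rw [JJ, JJ, JJ, ← ofReal_norm_eq_enorm, ← ENNReal.ofReal_add (by positivity) (by positivity),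
      ← ENNReal.ofReal_add (by positivity) (by positivity), ← ENNReal.ofReal_mul (by positivity),
      ← ENNReal.ofReal_mul (by positivity), ← ENNReal.ofReal_mul (by positivity),
      ← ENNReal.ofReal_mul (by positivity)]
    refine ENNReal.ofReal_le_ofReal ?_
    rw [norm_mul, norm_mul, Complex.norm_real, Real.norm_eq_abs]
    have g := ker_geom k m n hn1
    have t1 : PP k.1 ≤ PP m.1 + PP n.1 := by
      have := PP_add m.1 n.1
      rwa [hn1, add_sub_cancel, ← hn1] at this
    have t2 : PP n.1 ≤ PP k.1 + PP m.1 := by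
      have := PP_add k.1 (-m.1)
      rwa [PP_neg, ← sub_eq_add_neg, ← hn1] at this
    have t3 : PP m.1 ≤ PP k.1 + PP n.1 := by
      have := PP_add k.1 (-n.1)
      rwa [PP_neg, ← sub_eq_add_neg, hn1, sub_sub_cancel, ← hn1] at this
    have hb := hker _ _ _ (PP_ge m) (PP_ge n) (PP_ge k) t1 t2 t3
    have hb2 := (mul_le_mul_of_nonneg_left g (by positivity : 0 ≤ PP k.1 ^ a)).trans hb
    have hb3 := mul_le_mul_of_nonneg_right hb2 (by positivity : 0 ≤ ‖c m‖ * ‖d n‖)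
    refine (le_of_eq ?_).trans (hb3.trans (le_of_eq ?_)) <;> ring
  · rw [dif_neg h]
    simp

theorem B_bound (a s t : ℤ) (C : ℝ) (hC : 0 < C)
    (hker : ∀ p q r : ℝ, 1 ≤ p → 1 ≤ q → 1 ≤ r → r ≤ p + q → q ≤ r + p → p ≤ r + q →
      r ^ a * min q r ≤ C * ((p ^ (-2:ℤ) + q ^ (-2:ℤ) + r ^ (-2:ℤ)) * (p ^ s * q ^ t)))
    (c d : Coef) (hc : FinH (s:ℝ) c) (hd : FinH (t:ℝ) d) :
    hN (a:ℝ) (Bc c d) ≤ C * (3 * √(∑' n, JJ n ^ 2).toReal) * (hN (s:ℝ) c * hN (t:ℝ) d) := by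
  have h1 : ∑' k, FF a (Bc c d) k ^ 2 ≤ ENNReal.ofReal C ^ 2 * (9 * (∑' m, JJ m ^ 2) *
      ((∑' m, FF s c m ^ 2) * ∑' n, FF t d n ^ 2)) := by
    refine (ENNReal.tsum_le_tsum fun k =>
      pow_le_pow_left' (pointwise_bound a s t C hC hker c d k) 2).trans ?_
    simp only [mul_pow (ENNReal.ofReal C)]
    rw [ENNReal.tsum_mul_left]
    exact mul_le_mul_right (conv_all JJ (FF s c) (FF t d)) _
  have hfin : ENNReal.ofReal C ^ 2 * (9 * (∑' m, JJ m ^ 2) *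
      ((∑' m, FF s c m ^ 2) * ∑' n, FF t d n ^ 2)) ≠ ⊤ := by
    rw [FF_fin s c hc, FF_fin t d hd]
    have := JJ_sum
    finiteness
  have h2 := ENNReal.toReal_mono hfin h1
  rw [← hSq_eq] at h2
  simp only [ENNReal.toReal_mul, ← hSq_eq, ENNReal.toReal_pow, ENNReal.toReal_ofReal hC.le] at h2
  have hA : 0 ≤ (∑' n, JJ n ^ 2).toReal := ENNReal.toReal_nonneg
  have hs : 0 ≤ hSq (s:ℝ) c := by rw [hSq_eq]; exact ENNReal.toReal_nonneg
  have ht : 0 ≤ hSq (t:ℝ) d := by rw [hSq_eq]; exact ENNReal.toReal_nonneg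
  unfold hN
  refine Real.sqrt_le_iff.2 ⟨by positivity, h2.trans (le_of_eq ?_)⟩
  simp only [mul_pow, Real.sq_sqrt hA, Real.sq_sqrt hs, Real.sq_sqrt ht]
  norm_num
  ring

theorem main_bound (a : ℤ) : ∃ C : ℝ, 0 < C ∧
      ∀ v w : Coef, MemH ((max (|a| + 1) 2 : ℤ) : ℝ) v → MemH ((a : ℝ) + 1) w →
        hN (a : ℝ) (Bc v w) + hN (a : ℝ) (Bc w v) ≤
          C * hN ((max (|a| + 1) 2 : ℤ) : ℝ) v * hN ((a : ℝ) + 1) w := by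
  obtain ⟨C, hC, hk⟩ := ker_bound a (max (|a| + 1) 2) (le_max_right _ _) (le_max_left _ _)
  have e : (a:ℝ) + 1 = ((a + 1 : ℤ) : ℝ) := by push_cast; rfl
  rw [e]
  refine ⟨2 * (C * (3 * √(∑' n, JJ n ^ 2).toReal)) + 1, by positivity, fun v w hv hw => ?_⟩
  have b1 := B_bound a (max (|a| + 1) 2) (a + 1) C hC
    (fun p q r h1 h2 h3 h4 h5 h6 => (hk p q r h1 h2 h3 h4 h5 h6).1) v w hv.2 hw.2
  have b2 := B_bound a (a + 1) (max (|a| + 1) 2) C hC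
    (fun p q r h1 h2 h3 h4 h5 h6 => (hk p q r h1 h2 h3 h4 h5 h6).2) w v hw.2 hv.2
  have hp : 0 ≤ hN ((max (|a| + 1) 2 : ℤ) : ℝ) v * hN ((a + 1 : ℤ) : ℝ) w :=
    mul_nonneg (Real.sqrt_nonneg _) (Real.sqrt_nonneg _)
  rw [mul_comm (hN ((a + 1 : ℤ) : ℝ) w)] at b2
  rw [mul_assoc]
  linarith

/-- Proposition `PropProdSob`. For `a ∈ ℤ` and
`b = max{|a|+1, 2}`, there is `C = C(a) > 0` such that for all `v ∈ Ḣ^b_⋄`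
and `w ∈ Ḣ^{a+1}_⋄`,
`‖B[v,w]‖_{Ḣ^a} + ‖B[w,v]‖_{Ḣ^a} ≤ C ‖v‖_{Ḣ^b} ‖w‖_{Ḣ^{a+1}}`; in
particular, if `a ≥ 1` then
`‖B[v,w]‖_{Ḣ^a} + ‖B[w,v]‖_{Ḣ^a} ≤ C ‖v‖_{Ḣ^{a+1}} ‖w‖_{Ḣ^{a+1}}`. -/
theorem statement13 (a : ℤ) :
    (∃ C : ℝ, 0 < C ∧
      ∀ v w : Coef, MemH ((max (|a| + 1) 2 : ℤ) : ℝ) v → MemH ((a : ℝ) + 1) w →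
        hN (a : ℝ) (Bc v w) + hN (a : ℝ) (Bc w v) ≤
          C * hN ((max (|a| + 1) 2 : ℤ) : ℝ) v * hN ((a : ℝ) + 1) w) ∧
    (1 ≤ a → ∃ C : ℝ, 0 < C ∧
      ∀ v w : Coef, MemH ((a : ℝ) + 1) v → MemH ((a : ℝ) + 1) w →
        hN (a : ℝ) (Bc v w) + hN (a : ℝ) (Bc w v) ≤
          C * hN ((a : ℝ) + 1) v * hN ((a : ℝ) + 1) w) := by
  refine ⟨main_bound a, fun ha => ?_⟩
  have e : ((max (|a| + 1) 2 : ℤ) : ℝ) = (a:ℝ) + 1 := by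
    rw [abs_of_nonneg (by omega), max_eq_left (by omega)]
    push_cast
    rfl
  have h := main_bound a
  rw [e] at h
  exact h

end NS2D
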